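/- Let r > 2 and let (X_i)_{i≥1} be a sequence of random variables on (Ω, 𝒜) that is IID under E̅, with E̅[X₁] = E̅[−X₁] = 0 and E̅[|X₁|^r] < ∞. Then sup_{n≥1} E̅[|S_n / √n|^r] < ∞. -/

import Mathlib

open MeasureTheory Filter Topology

/-- Upper expectation `E̅[X] = sup_{P ∈ 𝒬} E_P[X]` of a set of probability measures. -/
noncomputable def upperExp {Ω : Type*} [MeasurableSpace Ω]
    (𝒬 : Set (Measure Ω)) (X : Ω → ℝ) : ℝ :=
  sSup ((fun P : Measure Ω => ∫ ω, X ω ∂P) '' 𝒬)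

/-- `E̅[X]` is finite: `X` is integrable under each `P ∈ 𝒬` and the
integrals are bounded above. -/
def HasFiniteUpperExp {Ω : Type*} [MeasurableSpace Ω]
    (𝒬 : Set (Measure Ω)) (X : Ω → ℝ) : Prop :=
  (∀ P ∈ 𝒬, Integrable X P) ∧ BddAbove ((fun P : Measure Ω => ∫ ω, X ω ∂P) '' 𝒬)

/-- Peng independence of a random variable `Y` from a random vector `X` under
the upper expectation associated with `𝒬`. -/
def PengIndep {Ω : Type*} [MeasurableSpace Ω]
    (𝒬 : Set (Measure Ω)) {d : ℕ} (X : Ω → (Fin d → ℝ)) (Y : Ω → ℝ) : Prop :=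
  ∀ φ : (Fin d → ℝ) → ℝ → ℝ,
    Measurable (fun p : (Fin d → ℝ) × ℝ => φ p.1 p.2) →
    HasFiniteUpperExp 𝒬 (fun ω => φ (X ω) (Y ω)) →
    (∀ x, HasFiniteUpperExp 𝒬 (fun ω => φ x (Y ω))) →
    HasFiniteUpperExp 𝒬 (fun ω => upperExp 𝒬 (fun ω' => φ (X ω) (Y ω'))) →
    upperExp 𝒬 (fun ω => φ (X ω) (Y ω)) =
      upperExp 𝒬 (fun ω => upperExp 𝒬 (fun ω' => φ (X ω) (Y ω')))

/-- A sequence `(X_i)` is IID under the upper expectation: each `X_i` has the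
same distribution as `X_0` (tested against measurable functions with finite
expectations) and `X_{i+1}` is Peng-independent of `(X_0, …, X_i)`. -/
def IsIIDUnder {Ω : Type*} [MeasurableSpace Ω]
    (𝒬 : Set (Measure Ω)) (X : ℕ → Ω → ℝ) : Prop :=
  (∀ i, ∀ φ : ℝ → ℝ, Measurable φ →
      HasFiniteUpperExp 𝒬 (fun ω => φ (X i ω)) →
      HasFiniteUpperExp 𝒬 (fun ω => φ (X 0 ω)) →
      upperExp 𝒬 (fun ω => φ (X i ω)) = upperExp 𝒬 (fun ω => φ (X 0 ω))) ∧
  (∀ i : ℕ, PengIndep 𝒬 (fun ω (j : Fin (i + 1)) => X (j : ℕ) ω) (X (i + 1)))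

/-- Partial sum `S_n = X_0 + ⋯ + X_{n-1}` (the first `n` variables). -/
def partialSum {Ω : Type*} (X : ℕ → Ω → ℝ) (n : ℕ) (ω : Ω) : ℝ :=
  ∑ i ∈ Finset.range n, X i ω

lemma aux_tangent {p a b : ℝ} (hp : 1 ≤ p) (ha : 0 ≤ a) (hb : 0 ≤ b) :
    a ^ p + p * a ^ (p - 1) * (b - a) ≤ b ^ p := by
  rcases ha.eq_or_lt with rfl | ha
  · rcases hp.eq_or_lt with rfl | hp
    · simp
    · rw [Real.zero_rpow (by linarith), Real.zero_rpow (by linarith)]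
      simp; positivity
  · have h := one_add_mul_self_le_rpow_one_add (s := b / a - 1) (p := p)
      (by have : 0 ≤ b / a := by positivity
          linarith) hp
    have e : 1 + (b / a - 1) = b / a := by ring
    rw [e, Real.div_rpow hb ha.le, le_div_iff₀ (by positivity)] at h
    refine le_trans (le_of_eq ?_) h
    rw [Real.rpow_sub_one ha.ne']
    field_simp

lemma aux_abs_tangent {r : ℝ} (hr : 2 < r) (u v : ℝ) :
    |u| ^ r + r * (|u| ^ (r - 2) * u) * (v - u) ≤ |v| ^ r := by
  have h := aux_tangent (p := r) (by linarith) (abs_nonneg u) (abs_nonneg v)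
  have e : |u| ^ (r - 1) = |u| ^ (r - 2) * |u| := by
    rw [← Real.rpow_add_one' (abs_nonneg u) (by linarith)]; congr 1; ring
  rw [e] at h
  have h1 : u * v ≤ |u| * |v| := by rw [← abs_mul]; exact le_abs_self _
  have h2 : u * u = |u| * |u| := (abs_mul_abs_self u).symm
  have h3 : 0 ≤ r * |u| ^ (r - 2) := by positivity
  nlinarith [mul_le_mul_of_nonneg_left h1 h3]

lemma aux_pow_diff {p a b M : ℝ} (hp : 1 ≤ p) (ha : 0 ≤ a) (hb : 0 ≤ b) (haM : a ≤ M)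
    (hbM : b ≤ M) : |a ^ p - b ^ p| ≤ p * M ^ (p - 1) * |a - b| := by
  have h1 := aux_tangent hp ha hb
  have h2 := aux_tangent hp hb ha
  have h3 : a ^ (p - 1) ≤ M ^ (p - 1) := Real.rpow_le_rpow ha haM (by linarith)
  have h4 : b ^ (p - 1) ≤ M ^ (p - 1) := Real.rpow_le_rpow hb hbM (by linarith)
  have h5 : 0 ≤ a ^ (p - 1) := by positivity
  have h6 : 0 ≤ b ^ (p - 1) := by positivity
  have h7 : a ^ (p-1) * (a - b) ≤ M ^ (p-1) * |a - b| :=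
      (mul_le_mul_of_nonneg_left (le_abs_self _) h5).trans
        (mul_le_mul_of_nonneg_right h3 (abs_nonneg _))
  have h8 : b ^ (p-1) * (b - a) ≤ M ^ (p-1) * |a - b| := by
    rw [abs_sub_comm]
    exact (mul_le_mul_of_nonneg_left (le_abs_self _) h6).trans
        (mul_le_mul_of_nonneg_right h4 (abs_nonneg _))
  rw [abs_le]
  constructor <;> nlinarith

lemma aux_diff_bound {q u v M : ℝ} (hq : 0 < q) (hu : |u| ≤ M) (hv : |v| ≤ M) :
    (|u| ^ q * u - |v| ^ q * v) * (u - v) ≤ (q + 2) * M ^ q * (u - v) ^ 2 := by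
  have h := aux_pow_diff (p := q + 1) (by linarith) (abs_nonneg u) (abs_nonneg v) hu hv
  have e : q + 1 - 1 = q := by ring
  rw [e, Real.rpow_add_one' (abs_nonneg u) (by linarith),
    Real.rpow_add_one' (abs_nonneg v) (by linarith)] at h
  have hM : 0 ≤ M := (abs_nonneg u).trans hu
  have h1 : |(|u| ^ q - |v| ^ q)| * |v| ≤ |(|u| ^ q * |u| - |v| ^ q * |v|)| := by
    rcases le_total |u| |v| with hle | hle
    · have h2 : |u| ^ q ≤ |v| ^ q := Real.rpow_le_rpow (abs_nonneg _) hle hq.le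
      have h3 : 0 ≤ |u| ^ q := by positivity
      rw [abs_of_nonpos (a := |u| ^ q - |v| ^ q) (by linarith), abs_of_nonpos
        (a := |u| ^ q * |u| - |v| ^ q * |v|) (by nlinarith [abs_nonneg v, abs_nonneg u])]
      nlinarith
    · have h2 : |v| ^ q ≤ |u| ^ q := Real.rpow_le_rpow (abs_nonneg _) hle hq.le
      have h3 : 0 ≤ |v| ^ q := by positivity
      rw [abs_of_nonneg (a := |u| ^ q - |v| ^ q) (by linarith), abs_of_nonneg
        (a := |u| ^ q * |u| - |v| ^ q * |v|) (by nlinarith [abs_nonneg v, abs_nonneg u])]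
      nlinarith
  have h4 : |(|u| - |v|)| ≤ |u - v| := abs_abs_sub_abs_le_abs_sub u v
  have h5 : |u| ^ q ≤ M ^ q := Real.rpow_le_rpow (abs_nonneg _) hu hq.le
  have h6 : (0:ℝ) ≤ M ^ q := by positivity
  have h7 : (|u| ^ q - |v| ^ q) * v * (u - v) ≤ (q + 1) * M ^ q * (u - v) ^ 2 := by
    calc (|u| ^ q - |v| ^ q) * v * (u - v) ≤ |(|u| ^ q - |v| ^ q) * v * (u - v)| := le_abs_self _
      _ = |(|u| ^ q - |v| ^ q)| * |v| * |u - v| := by rw [abs_mul, abs_mul]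
      _ ≤ ((q + 1) * M ^ q * |u - v|) * |u - v| := by
          refine mul_le_mul_of_nonneg_right (h1.trans (h.trans ?_)) (abs_nonneg _)
          exact mul_le_mul_of_nonneg_left h4 (by positivity)
      _ = _ := by rw [mul_assoc, abs_mul_abs_self]; ring
  have h8 : |u| ^ q * (u - v) ^ 2 ≤ M ^ q * (u - v) ^ 2 :=
    mul_le_mul_of_nonneg_right h5 (sq_nonneg _)
  nlinarith

lemma aux_add_rpow {q a b : ℝ} (hq : 0 ≤ q) (ha : 0 ≤ a) (hb : 0 ≤ b) :
    (a + b) ^ q ≤ 2 ^ q * (a ^ q + b ^ q) := by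
  have ha' : 0 ≤ a ^ q := by positivity
  have hb' : 0 ≤ b ^ q := by positivity
  rcases le_total a b with h | h
  · calc (a + b) ^ q ≤ (2 * b) ^ q := Real.rpow_le_rpow (by positivity) (by linarith) hq
      _ = 2 ^ q * b ^ q := Real.mul_rpow (by norm_num) hb
      _ ≤ _ := mul_le_mul_of_nonneg_left (by linarith) (by positivity)
  · calc (a + b) ^ q ≤ (2 * a) ^ q := Real.rpow_le_rpow (by positivity) (by linarith) hq
      _ = 2 ^ q * a ^ q := Real.mul_rpow (by norm_num) ha
      _ ≤ _ := mul_le_mul_of_nonneg_left (by linarith) (by positivity)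

lemma aux_sq_mul {r : ℝ} (hr : 2 < r) (y : ℝ) : |y| ^ (r - 2) * y ^ 2 = |y| ^ r := by
  rw [← sq_abs y, ← Real.rpow_two, ← Real.rpow_add' (abs_nonneg y) (by linarith)]
  congr 1; ring

lemma aux_taylor {r : ℝ} (hr : 2 < r) (x y : ℝ) :
    |x + y| ^ r ≤ |x| ^ r + r * (|x| ^ (r - 2) * x * y)
      + r ^ 2 * 2 ^ (r - 2) * (|x| ^ (r - 2) * y ^ 2 + |y| ^ r) := by
  have h1 := aux_abs_tangent hr (x + y) x
  have h2 := aux_diff_bound (q := r - 2) (u := x + y) (v := x) (M := |x| + |y|) (by linarith)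
    (abs_add_le x y) (by linarith [abs_nonneg y])
  have h3 := aux_add_rpow (q := r - 2) (by linarith) (abs_nonneg x) (abs_nonneg y)
  have h4 := aux_sq_mul hr y
  have h5 : (|x| + |y|) ^ (r - 2) * y ^ 2 ≤ 2 ^ (r - 2) * (|x| ^ (r - 2) * y ^ 2 + |y| ^ r) := by
    rw [← h4]
    calc _ ≤ _ := mul_le_mul_of_nonneg_right h3 (sq_nonneg y)
      _ = _ := by ring
  have e : x + y - x = y := by ring
  have e' : x - (x + y) = - y := by ring
  rw [e] at h2
  rw [e'] at h1
  have h6 := mul_le_mul_of_nonneg_left h2 (by linarith : 0 ≤ r)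
  have h7 := mul_le_mul_of_nonneg_left h5 (by positivity : 0 ≤ r ^ 2)
  nlinarith

section
variable {Ω : Type*} [MeasurableSpace Ω] {𝒬 : Set (Measure Ω)}

lemma aux_hf_iff {Z : Ω → ℝ} : HasFiniteUpperExp 𝒬 Z ↔
    (∀ P ∈ 𝒬, Integrable Z P) ∧ ∃ c, ∀ P ∈ 𝒬, ∫ ω, Z ω ∂P ≤ c := by
  unfold HasFiniteUpperExp
  simp [bddAbove_def]

lemma aux_hf_dom {Y Z : Ω → ℝ} (hY : Measurable Y) (hZ : HasFiniteUpperExp 𝒬 Z)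
    (h : ∀ ω, |Y ω| ≤ Z ω) : HasFiniteUpperExp 𝒬 Y := by
  rw [aux_hf_iff] at hZ ⊢
  obtain ⟨hi, c, hc⟩ := hZ
  have hiY : ∀ P ∈ 𝒬, Integrable Y P := fun P hP =>
    (hi P hP).mono' hY.aestronglyMeasurable (ae_of_all _ h)
  exact ⟨hiY, c, fun P hP => (integral_mono (hiY P hP) (hi P hP)
    (fun ω => (le_abs_self _).trans (h ω))).trans (hc P hP)⟩

lemma aux_hf_add {Y Z : Ω → ℝ} (hY : HasFiniteUpperExp 𝒬 Y) (hZ : HasFiniteUpperExp 𝒬 Z) :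
    HasFiniteUpperExp 𝒬 (fun ω => Y ω + Z ω) := by
  rw [aux_hf_iff] at hY hZ ⊢
  obtain ⟨hi, c, hc⟩ := hY
  obtain ⟨hi', c', hc'⟩ := hZ
  refine ⟨fun P hP => (hi P hP).add (hi' P hP), c + c', fun P hP => ?_⟩
  rw [integral_add (hi P hP) (hi' P hP)]
  exact add_le_add (hc P hP) (hc' P hP)

lemma aux_hf_mul {Z : Ω → ℝ} {a : ℝ} (ha : 0 ≤ a) (hZ : HasFiniteUpperExp 𝒬 Z) :
    HasFiniteUpperExp 𝒬 (fun ω => a * Z ω) := by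
  rw [aux_hf_iff] at hZ ⊢
  obtain ⟨hi, c, hc⟩ := hZ
  refine ⟨fun P hP => (hi P hP).const_mul a, a * c, fun P hP => ?_⟩
  rw [integral_const_mul]
  exact mul_le_mul_of_nonneg_left (hc P hP) ha

lemma aux_hf_const (hprob : ∀ P ∈ 𝒬, IsProbabilityMeasure P) (a : ℝ) :
    HasFiniteUpperExp 𝒬 (fun _ : Ω => a) := by
  rw [aux_hf_iff]
  refine ⟨fun P hP => ?_, a, fun P hP => ?_⟩ <;> have := hprob P hP
  · exact integrable_const a
  · simp

lemma aux_le_upper {Z : Ω → ℝ} (hZ : HasFiniteUpperExp 𝒬 Z) {P : Measure Ω} (hP : P ∈ 𝒬) :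
    ∫ ω, Z ω ∂P ≤ upperExp 𝒬 Z := le_csSup hZ.2 ⟨P, hP, rfl⟩

lemma aux_upper_le {Z : Ω → ℝ} (h𝒬 : 𝒬.Nonempty) {c : ℝ}
    (h : ∀ P ∈ 𝒬, ∫ ω, Z ω ∂P ≤ c) : upperExp 𝒬 Z ≤ c := by
  apply csSup_le (h𝒬.image _)
  rintro _ ⟨P, hP, rfl⟩
  exact h P hP

lemma aux_upper_mul {Z : Ω → ℝ} (h𝒬 : 𝒬.Nonempty) {a : ℝ} (ha : 0 ≤ a)
    (hZ : HasFiniteUpperExp 𝒬 Z) :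
    upperExp 𝒬 (fun ω => a * Z ω) = a * upperExp 𝒬 Z := by
  apply le_antisymm
  · refine aux_upper_le h𝒬 fun P hP => ?_
    rw [integral_const_mul]
    exact mul_le_mul_of_nonneg_left (aux_le_upper hZ hP) ha
  · rcases ha.eq_or_lt with rfl | ha'
    · obtain ⟨P, hP⟩ := h𝒬
      have := aux_le_upper (aux_hf_mul le_rfl hZ) hP
      simpa using this
    · rw [mul_comm, ← le_div_iff₀ ha']
      refine aux_upper_le h𝒬 fun P hP => ?_
      rw [le_div_iff₀ ha', mul_comm, ← integral_const_mul]
      exact aux_le_upper (aux_hf_mul ha hZ) hP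

/-- Peng independence applied to a product test function. -/
lemma aux_indep {X : ℕ → Ω → ℝ} (h𝒬 : 𝒬.Nonempty) (hiid : IsIIDUnder 𝒬 X) (n : ℕ)
    {h k : ℝ → ℝ} (hh : Measurable h) (hk : Measurable k) (u D : ℝ)
    (hf1 : HasFiniteUpperExp 𝒬 (fun ω => h (partialSum X (n + 1) ω) * k (X (n + 1) ω)))
    (hf2 : ∀ c, HasFiniteUpperExp 𝒬 (fun ω => c * k (X (n + 1) ω)))
    (hu : ∀ s, upperExp 𝒬 (fun ω => h s * k (X (n + 1) ω)) = h s * u)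
    (hf3 : HasFiniteUpperExp 𝒬 (fun ω => h (partialSum X (n + 1) ω) * u))
    (hD : ∀ P ∈ 𝒬, ∫ ω, h (partialSum X (n + 1) ω) * u ∂P ≤ D)
    {P : Measure Ω} (hP : P ∈ 𝒬) :
    ∫ ω, h (partialSum X (n + 1) ω) * k (X (n + 1) ω) ∂P ≤ D := by
  refine (aux_le_upper hf1 hP).trans ?_
  have e : ∀ ω, ∑ j : Fin (n + 1), X (j : ℕ) ω = partialSum X (n + 1) ω := fun ω =>
    Fin.sum_univ_eq_sum_range (fun i => X i ω) (n + 1)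
  have := hiid.2 n (fun x y => h (∑ j, x j) * k y) (by fun_prop)
    (by simpa only [e] using hf1) (fun x => hf2 _)
    (by simpa only [e, hu] using hf3)
  simp only [e, hu] at this
  rw [this]
  exact aux_upper_le h𝒬 hD

/-- Uniform moment bound for every `X i`. -/
lemma aux_moment {X : ℕ → Ω → ℝ} (h𝒬 : 𝒬.Nonempty)
    (hprob : ∀ P ∈ 𝒬, IsProbabilityMeasure P) (hmeas : ∀ i, Measurable (X i))
    (hiid : IsIIDUnder 𝒬 X) {r : ℝ}
    (hmom : HasFiniteUpperExp 𝒬 (fun ω => |X 0 ω| ^ r)) (i : ℕ) :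
    ∀ P ∈ 𝒬, Integrable (fun ω => |X i ω| ^ r) P ∧
      ∫ ω, |X i ω| ^ r ∂P ≤ upperExp 𝒬 (fun ω => |X 0 ω| ^ r) := by
  intro P hP
  have := hprob P hP
  set m := upperExp 𝒬 (fun ω => |X 0 ω| ^ r) with hm
  have hbd : ∀ (K : ℕ) (j : ℕ), HasFiniteUpperExp 𝒬 (fun ω => min (|X j ω| ^ r) (K : ℝ)) := by
    intro K j
    refine aux_hf_dom (by have := hmeas j; fun_prop) (aux_hf_const hprob (K : ℝ)) fun ω => ?_
    rw [abs_of_nonneg (by positivity)]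
    exact min_le_right _ _
  have hK : ∀ K : ℕ, ∫ ω, min (|X i ω| ^ r) (K : ℝ) ∂P ≤ m := by
    intro K
    refine (aux_le_upper (hbd K i) hP).trans ?_
    rw [hiid.1 i (fun x => min (|x| ^ r) (K : ℝ)) (by fun_prop) (hbd K i) (hbd K 0)]
    exact aux_upper_le h𝒬 fun P' hP' => (integral_mono ((hbd K 0).1 P' hP') (hmom.1 P' hP')
      (fun ω => min_le_left _ _)).trans (aux_le_upper hmom hP')
  have hlin : ∫⁻ ω, ENNReal.ofReal (|X i ω| ^ r) ∂P ≤ ENNReal.ofReal m := by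
    have hsup : ∀ ω, ENNReal.ofReal (|X i ω| ^ r) =
        ⨆ K : ℕ, ENNReal.ofReal (min (|X i ω| ^ r) (K : ℝ)) := by
      intro ω
      apply le_antisymm
      · obtain ⟨K, hK⟩ := exists_nat_ge (|X i ω| ^ r)
        refine le_trans (le_of_eq ?_) (le_iSup _ K)
        rw [min_eq_left hK]
      · exact iSup_le fun K => ENNReal.ofReal_le_ofReal (min_le_left _ _)
    simp_rw [hsup]
    rw [lintegral_iSup (fun K => by have := hmeas i; fun_prop)]
    · refine iSup_le fun K => ?_
      rw [← ofReal_integral_eq_lintegral_ofReal ((hbd K i).1 P hP)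
        (ae_of_all _ fun ω => by positivity)]
      exact ENNReal.ofReal_le_ofReal (hK K)
    · intro K L hKL ω
      exact ENNReal.ofReal_le_ofReal (min_le_min_left _ (by exact_mod_cast hKL))
  have hms : Measurable (fun ω => |X i ω| ^ r) := by have := hmeas i; fun_prop
  have hint : Integrable (fun ω => |X i ω| ^ r) P := by
    refine ⟨hms.aestronglyMeasurable, ?_⟩
    rw [hasFiniteIntegral_iff_ofReal (ae_of_all _ fun ω => by positivity)]
    exact hlin.trans_lt ENNReal.ofReal_lt_top
  refine ⟨hint, ?_⟩
  rw [← ofReal_integral_eq_lintegral_ofReal hint (ae_of_all _ fun ω => by positivity)] at hlin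
  have hm0 : 0 ≤ m := (integral_nonneg fun ω => by positivity).trans (aux_le_upper hmom hP)
  exact (ENNReal.ofReal_le_ofReal_iff hm0).1 hlin

end

lemma aux_split {r t : ℝ} (hr : 2 < r) (ht : 0 < t) (s : ℝ) :
    |s| ^ (r - 2) ≤ |s| ^ r / t + t ^ (r / 2 - 1) := by
  rcases le_total (s ^ 2) t with h | h
  · have e : |s| ^ (r - 2) = (s ^ 2) ^ (r / 2 - 1) := by
      rw [← sq_abs, ← Real.rpow_two, ← Real.rpow_mul (abs_nonneg s)]; congr 1; ring
    have h1 : (s ^ 2) ^ (r / 2 - 1) ≤ t ^ (r / 2 - 1) :=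
      Real.rpow_le_rpow (sq_nonneg s) h (by linarith)
    have h2 : 0 ≤ |s| ^ r / t := by positivity
    linarith
  · have h1 : |s| ^ (r - 2) ≤ |s| ^ r / t := by
      rw [le_div_iff₀ ht, ← aux_sq_mul hr s]
      exact mul_le_mul_of_nonneg_left h (by positivity)
    have h2 : 0 ≤ t ^ (r / 2 - 1) := by positivity
    linarith

lemma aux_le_one_add {p r a : ℝ} (hp : 0 ≤ p) (hpr : p ≤ r) (ha : 0 ≤ a) :
    a ^ p ≤ 1 + a ^ r := by
  have h2 : 0 ≤ a ^ r := by positivity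
  rcases le_total a 1 with h | h
  · have := Real.rpow_le_one ha h hp
    linarith
  · have := Real.rpow_le_rpow_of_exponent_le h hpr
    linarith

lemma aux_young {p q r a b : ℝ} (hp : 0 ≤ p) (hq : 0 ≤ q) (h : p + q = r) (hr : 0 < r)
    (ha : 0 ≤ a) (hb : 0 ≤ b) : a ^ p * b ^ q ≤ a ^ r + b ^ r := by
  have h1 : 0 ≤ a ^ r := by positivity
  have h2 : 0 ≤ b ^ r := by positivity
  rcases le_total a b with hab | hab
  · calc a ^ p * b ^ q ≤ b ^ p * b ^ q :=
          mul_le_mul_of_nonneg_right (Real.rpow_le_rpow ha hab hp) (by positivity)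
      _ = b ^ r := by rw [← Real.rpow_add' hb (by rw [h]; exact hr.ne'), h]
      _ ≤ _ := by linarith
  · calc a ^ p * b ^ q ≤ a ^ p * a ^ q :=
          mul_le_mul_of_nonneg_left (Real.rpow_le_rpow hb hab hq) (by positivity)
      _ = a ^ r := by rw [← Real.rpow_add' ha (by rw [h]; exact hr.ne'), h]
      _ ≤ _ := by linarith

lemma aux_const {r C v m B K N : ℝ} (hr : 2 < r) (hC : 0 ≤ C) (hv : 0 ≤ v) (hm : 0 ≤ m)
    (hB : B = 2 * C * v + 1) (hK : K = 2 * (C * v * B ^ (r / 2 - 1) + C * m) + m) (hN : 1 ≤ N) :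
    K * N ^ (r / 2) + C * ((K * N ^ (r / 2) / (B * N) + (B * N) ^ (r / 2 - 1)) * v + m)
      ≤ K * (N + 1) ^ (r / 2) := by
  have hB1 : 0 < B := by rw [hB]; positivity
  have hN0 : 0 < N := by linarith
  have hK0 : 0 ≤ K := by rw [hK]; positivity
  have h1 := aux_tangent (p := r / 2) (a := N) (b := N + 1) (by linarith) hN0.le (by linarith)
  have e : N ^ (r / 2) = N ^ (r / 2 - 1) * N := by
    rw [Real.rpow_sub_one hN0.ne']; field_simp
  have h2 : 1 ≤ N ^ (r / 2 - 1) := Real.one_le_rpow hN (by linarith)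
  have e2 : K * N ^ (r / 2) / (B * N) = K / B * N ^ (r / 2 - 1) := by
    rw [e]; field_simp
  rw [e2, Real.mul_rpow hB1.le hN0.le]
  set T := N ^ (r / 2 - 1)
  set b := B ^ (r / 2 - 1)
  have h3 : C * v * (K / B) ≤ K / 2 := by
    rw [mul_div_assoc', div_le_div_iff₀ hB1 (by norm_num)]
    rw [hB]; nlinarith
  have h4 : C * v * (K / B) + C * v * b + C * m ≤ K := by
    have : C * v * b + C * m ≤ K / 2 := by rw [hK]; linarith
    linarith
  have h5 : N ^ (r / 2) + T ≤ (N + 1) ^ (r / 2) := by nlinarith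
  have h6 := mul_le_mul_of_nonneg_left h5 hK0
  have h7 := mul_le_mul_of_nonneg_right h4 (by linarith : 0 ≤ T)
  have h8 : C * m * 1 ≤ C * m * T := mul_le_mul_of_nonneg_left h2 (by positivity)
  nlinarith

/-- For a centered IID sequence under the upper expectation with `E̅[|X_1|^r] < ∞`
for some `r > 2`, the normalized sums have uniformly bounded `r`-th moments:
`sup_{n ≥ 1} E̅[|S_n/√n|^r] < ∞`. -/
theorem sup_upperExp_normalized_moment_lt_top {Ω : Type*} [MeasurableSpace Ω]
    (𝒬 : Set (Measure Ω)) (h𝒬 : 𝒬.Nonempty)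
    (hprob : ∀ P ∈ 𝒬, IsProbabilityMeasure P)
    (X : ℕ → Ω → ℝ) (hmeas : ∀ i, Measurable (X i))
    (hiid : IsIIDUnder 𝒬 X)
    (r : ℝ) (hr : 2 < r)
    (hmean : upperExp 𝒬 (X 0) = 0)
    (hmean' : upperExp 𝒬 (fun ω => -X 0 ω) = 0)
    (hmom : HasFiniteUpperExp 𝒬 (fun ω => |X 0 ω| ^ r)) :
    ∃ M : ℝ, ∀ n : ℕ, 1 ≤ n →
      HasFiniteUpperExp 𝒬 (fun ω => |partialSum X n ω / Real.sqrt n| ^ r) ∧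
      upperExp 𝒬 (fun ω => |partialSum X n ω / Real.sqrt n| ^ r) ≤ M := by
  have hr0 : 0 < r := by linarith
  set m := upperExp 𝒬 (fun ω => |X 0 ω| ^ r) with hmdef
  have hmo := aux_moment h𝒬 hprob hmeas hiid hmom
  have hm0 : 0 ≤ m := by
    obtain ⟨P, hP⟩ := h𝒬
    exact (integral_nonneg fun ω => by positivity).trans (aux_le_upper hmom hP)
  have hXr : ∀ i, HasFiniteUpperExp 𝒬 (fun ω => |X i ω| ^ r) := fun i =>
    aux_hf_iff.2 ⟨fun P hP => (hmo i P hP).1, m, fun P hP => (hmo i P hP).2⟩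
  have hdom : ∀ i, HasFiniteUpperExp 𝒬 (fun ω => 1 + |X i ω| ^ r) := fun i =>
    aux_hf_add (aux_hf_const hprob 1) (hXr i)
  have hX1 : ∀ i c, HasFiniteUpperExp 𝒬 (fun ω => c * X i ω) := fun i c => by
    refine aux_hf_dom (by have := hmeas i; fun_prop) (aux_hf_mul (abs_nonneg c) (hdom i))
      fun ω => ?_
    rw [abs_mul]
    refine mul_le_mul_of_nonneg_left ?_ (abs_nonneg c)
    have := aux_le_one_add (p := 1) (r := r) zero_le_one (by linarith) (abs_nonneg (X i ω))
    rwa [Real.rpow_one] at this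
  have hsq : ∀ y : ℝ, y ^ 2 ≤ 1 + |y| ^ r := fun y => by
    have := aux_le_one_add (p := 2) (r := r) (by norm_num) (by linarith) (abs_nonneg y)
    rwa [Real.rpow_two, sq_abs] at this
  have hX2 : ∀ i c, HasFiniteUpperExp 𝒬 (fun ω => c * X i ω ^ 2) := fun i c => by
    refine aux_hf_dom (by have := hmeas i; fun_prop) (aux_hf_mul (abs_nonneg c) (hdom i))
      fun ω => ?_
    rw [abs_mul, abs_of_nonneg (sq_nonneg (X i ω))]
    exact mul_le_mul_of_nonneg_left (hsq _) (abs_nonneg c)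
  have hX1' : ∀ i, HasFiniteUpperExp 𝒬 (X i) := fun i => by simpa using hX1 i 1
  have hX1'' : ∀ i, HasFiniteUpperExp 𝒬 (fun ω => - X i ω) := fun i => by simpa using hX1 i (-1)
  have hX2' : ∀ i, HasFiniteUpperExp 𝒬 (fun ω => X i ω ^ 2) := fun i => by simpa using hX2 i 1
  have hzero : ∀ i, ∀ P ∈ 𝒬, ∫ ω, X i ω ∂P = 0 := by
    intro i P hP
    have h1 := aux_le_upper (hX1' i) hP
    have h2 := aux_le_upper (hX1'' i) hP
    have e1 := hiid.1 i (fun x => x) measurable_id (hX1' i) (hX1' 0)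
    have e2 := hiid.1 i (fun x => -x) measurable_neg (hX1'' i) (hX1'' 0)
    have e1' : upperExp 𝒬 (X i) = 0 := e1.trans hmean
    rw [e1'] at h1
    rw [e2, hmean', integral_neg] at h2
    linarith
  -- constants
  set C := r ^ 2 * 2 ^ (r - 2) with hC
  have hC0 : 0 ≤ C := by positivity
  set v := 1 + m with hv
  have hv0 : 0 ≤ v := by positivity
  obtain ⟨B, hB⟩ : ∃ B, B = 2 * C * v + 1 := ⟨_, rfl⟩
  obtain ⟨K, hK⟩ : ∃ K, K = 2 * (C * v * B ^ (r / 2 - 1) + C * m) + m := ⟨_, rfl⟩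
  have hB0 : 0 < B := by rw [hB]; positivity
  have hpm : ∀ n, Measurable (partialSum X n) := fun n => by
    unfold partialSum
    exact Finset.measurable_fun_sum _ fun i _ => hmeas i
  have main : ∀ n : ℕ, ∀ P ∈ 𝒬, Integrable (fun ω => |partialSum X (n + 1) ω| ^ r) P ∧
      ∫ ω, |partialSum X (n + 1) ω| ^ r ∂P ≤ K * ((n + 1 : ℕ) : ℝ) ^ (r / 2) := by
    intro n
    induction n with
    | zero =>
      intro P hP
      have hmK : m ≤ K := by
        rw [hK]
        have : 0 ≤ 2 * (C * v * B ^ (r / 2 - 1) + C * m) := by positivity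
        linarith
      simpa [partialSum] using ⟨(hmo 0 P hP).1, (hmo 0 P hP).2.trans hmK⟩
    | succ n ih =>
      have hm1 : Measurable (partialSum X (n + 1)) := hpm _
      have hm2 : Measurable (X (n + 1)) := hmeas _
      have hsum : ∀ ω, partialSum X (n + 1 + 1) ω = partialSum X (n + 1) ω + X (n + 1) ω :=
        fun ω => Finset.sum_range_succ _ _
      set S := partialSum X (n + 1) with hS
      set Y := X (n + 1) with hY
      obtain ⟨N, hN⟩ : ∃ N : ℝ, N = ((n + 1 : ℕ) : ℝ) := ⟨_, rfl⟩
      have hN1 : 1 ≤ N := by rw [hN]; exact_mod_cast Nat.succ_le_succ (Nat.zero_le n)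
      have hN2 : ((n + 1 + 1 : ℕ) : ℝ) = N + 1 := by rw [hN]; push_cast; ring
      rw [← hN] at ih
      rw [hN2]
      have hSr : HasFiniteUpperExp 𝒬 (fun ω => |S ω| ^ r) :=
        aux_hf_iff.2 ⟨fun P hP => (ih P hP).1, _, fun P hP => (ih P hP).2⟩
      have hYr : HasFiniteUpperExp 𝒬 (fun ω => |Y ω| ^ r) := hXr _
      have hSY := aux_hf_add hSr hYr
      have hA : HasFiniteUpperExp 𝒬 (fun ω => |S ω| ^ (r - 2) * S ω * Y ω) := by
        refine aux_hf_dom (by fun_prop) hSY fun ω => ?_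
        have := aux_young (p := r - 1) (q := 1) (r := r) (by linarith) zero_le_one (by ring) hr0
          (abs_nonneg (S ω)) (abs_nonneg (Y ω))
        refine le_trans (le_of_eq ?_) this
        rw [abs_mul, abs_mul, abs_of_nonneg (by positivity : 0 ≤ |S ω| ^ (r - 2)), Real.rpow_one,
          ← Real.rpow_add_one' (abs_nonneg _) (by linarith)]
        congr 2; ring
      have hD : HasFiniteUpperExp 𝒬 (fun ω => |S ω| ^ (r - 2) * Y ω ^ 2) := by
        refine aux_hf_dom (by fun_prop) hSY fun ω => ?_
        have := aux_young (p := r - 2) (q := 2) (r := r) (by linarith) zero_le_two (by ring) hr0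
          (abs_nonneg (S ω)) (abs_nonneg (Y ω))
        rw [abs_of_nonneg (by positivity)]
        rwa [Real.rpow_two, sq_abs] at this
      have hSq : HasFiniteUpperExp 𝒬 (fun ω => |S ω| ^ (r - 2)) := by
        refine aux_hf_dom (by fun_prop) (aux_hf_add (aux_hf_const hprob 1) hSr) fun ω => ?_
        rw [abs_of_nonneg (by positivity)]
        exact aux_le_one_add (by linarith) (by linarith) (abs_nonneg _)
      have hSqb : ∀ P ∈ 𝒬, ∫ ω, |S ω| ^ (r - 2) ∂P ≤
          K * N ^ (r / 2) / (B * N) + (B * N) ^ (r / 2 - 1) := by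
        intro P hP
        have := hprob P hP
        have ht : 0 < B * N := by positivity
        have hi : Integrable (fun ω => |S ω| ^ r / (B * N)) P := (ih P hP).1.div_const _
        calc ∫ ω, |S ω| ^ (r - 2) ∂P
            ≤ ∫ ω, (|S ω| ^ r / (B * N) + (B * N) ^ (r / 2 - 1)) ∂P :=
              integral_mono (hSq.1 P hP) (hi.add (integrable_const _))
                fun ω => aux_split hr ht (S ω)
          _ = (∫ ω, |S ω| ^ r ∂P) / (B * N) + (B * N) ^ (r / 2 - 1) := by
              rw [integral_add hi (integrable_const _), integral_div]; simp
          _ ≤ _ := by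
              have := div_le_div_of_nonneg_right (ih P hP).2 ht.le
              linarith
      set u := upperExp 𝒬 (fun ω => Y ω ^ 2) with hu
      have hu0 : 0 ≤ u := by
        obtain ⟨P, hP⟩ := h𝒬
        exact (integral_nonneg fun ω => by positivity).trans (aux_le_upper (hX2' (n + 1)) hP)
      have huv : u ≤ v := by
        refine aux_upper_le h𝒬 fun P hP => ?_
        have := hprob P hP
        calc ∫ ω, Y ω ^ 2 ∂P ≤ ∫ ω, (1 + |Y ω| ^ r) ∂P :=
              integral_mono ((hX2' (n + 1)).1 P hP) ((hdom (n + 1)).1 P hP) fun ω => hsq _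
          _ = 1 + ∫ ω, |Y ω| ^ r ∂P := by
              rw [integral_add (integrable_const _) (hYr.1 P hP)]; simp
          _ ≤ v := by have := (hmo (n + 1) P hP).2; linarith
      have hA0 : ∀ P ∈ 𝒬, ∫ ω, |S ω| ^ (r - 2) * S ω * Y ω ∂P ≤ 0 := by
        intro P hP
        refine aux_indep h𝒬 hiid n (h := fun s => |s| ^ (r - 2) * s) (k := fun y => y)
          (by fun_prop) (by fun_prop) 0 0 hA (hX1 (n + 1)) (fun s => ?_) ?_ ?_ hP
        · rw [mul_zero]
          have : ∀ P ∈ 𝒬, ∫ ω, |s| ^ (r - 2) * s * X (n + 1) ω ∂P = 0 := fun P hP => by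
            rw [integral_const_mul, hzero _ P hP, mul_zero]
          apply le_antisymm
          · exact aux_upper_le h𝒬 fun P hP => (this P hP).le
          · rw [← this P hP]
            exact aux_le_upper (hX1 (n + 1) _) hP
        · simpa using aux_hf_const hprob 0
        · simp
      have hD0 : ∀ P ∈ 𝒬, ∫ ω, |S ω| ^ (r - 2) * Y ω ^ 2 ∂P ≤
          (K * N ^ (r / 2) / (B * N) + (B * N) ^ (r / 2 - 1)) * v := by
        intro P hP
        refine aux_indep h𝒬 hiid n (h := fun s => |s| ^ (r - 2)) (k := fun y => y ^ 2)
          (by fun_prop) (by fun_prop) u _ hD (hX2 (n + 1)) (fun s => ?_) ?_ (fun P hP => ?_) hP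
        · exact aux_upper_mul h𝒬 (by positivity) (hX2' (n + 1))
        · simpa only [mul_comm] using aux_hf_mul hu0 hSq
        · rw [integral_mul_const]
          have h0 : 0 ≤ ∫ ω, |S ω| ^ (r - 2) ∂P := integral_nonneg fun ω => by positivity
          exact mul_le_mul (hSqb P hP) huv hu0 (h0.trans (hSqb P hP))
      intro P hP
      have hint : Integrable (fun ω => |partialSum X (n + 1 + 1) ω| ^ r) P := by
        have hb : HasFiniteUpperExp 𝒬 (fun ω => |S ω + Y ω| ^ r) := by
          refine aux_hf_dom (by fun_prop)
            (aux_hf_mul (by positivity : (0:ℝ) ≤ 2 ^ r) hSY) fun ω => ?_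
          rw [abs_of_nonneg (by positivity)]
          exact (Real.rpow_le_rpow (abs_nonneg _) (abs_add_le _ _) hr0.le).trans
            (aux_add_rpow hr0.le (abs_nonneg _) (abs_nonneg _))
        simpa only [hsum] using hb.1 P hP
      refine ⟨hint, le_trans ?_ (aux_const hr hC0 hv0 hm0 hB hK hN1)⟩
      have i1 := hSr.1 P hP
      have i2 : Integrable (fun ω => r * (|S ω| ^ (r - 2) * S ω * Y ω)) P :=
        (hA.1 P hP).const_mul r
      have i3' := (hD.1 P hP).add (hYr.1 P hP)
      have i3 : Integrable (fun ω => C * (|S ω| ^ (r - 2) * Y ω ^ 2 + |Y ω| ^ r)) P :=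
        i3'.const_mul C
      have i12 : Integrable (fun ω => |S ω| ^ r + r * (|S ω| ^ (r - 2) * S ω * Y ω)) P :=
        i1.add i2
      calc ∫ ω, |partialSum X (n + 1 + 1) ω| ^ r ∂P
          ≤ ∫ ω, (|S ω| ^ r + r * (|S ω| ^ (r - 2) * S ω * Y ω)
              + C * (|S ω| ^ (r - 2) * Y ω ^ 2 + |Y ω| ^ r)) ∂P := by
            refine integral_mono hint (i12.add i3) fun ω => ?_
            simp only [hsum]
            exact aux_taylor hr (S ω) (Y ω)
        _ = ∫ ω, |S ω| ^ r ∂P + r * ∫ ω, |S ω| ^ (r - 2) * S ω * Y ω ∂P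
              + C * (∫ ω, |S ω| ^ (r - 2) * Y ω ^ 2 ∂P + ∫ ω, |Y ω| ^ r ∂P) := by
            rw [integral_add i12 i3, integral_add i1 i2, integral_const_mul, integral_const_mul,
              integral_add (hD.1 P hP) (hYr.1 P hP)]
        _ ≤ _ := by
            have a1 := (ih P hP).2
            have a2 := mul_nonpos_of_nonneg_of_nonpos hr0.le (hA0 P hP)
            have a3 := mul_le_mul_of_nonneg_left
              (add_le_add (hD0 P hP) (hmo (n + 1) P hP).2) hC0
            linarith
  refine ⟨K, fun n hn => ?_⟩
  obtain ⟨k, rfl⟩ : ∃ k, n = k + 1 := ⟨n - 1, by omega⟩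
  have hnpos : (0 : ℝ) < ((k + 1 : ℕ) : ℝ) := by positivity
  have e : ∀ ω, |partialSum X (k + 1) ω / Real.sqrt ((k + 1 : ℕ) : ℝ)| ^ r =
      |partialSum X (k + 1) ω| ^ r / ((k + 1 : ℕ) : ℝ) ^ (r / 2) := by
    intro ω
    rw [abs_div, abs_of_nonneg (Real.sqrt_nonneg _),
      Real.div_rpow (abs_nonneg _) (Real.sqrt_nonneg _), Real.sqrt_eq_rpow,
      ← Real.rpow_mul hnpos.le]
    congr 2; ring
  simp only [e]
  have hb : ∀ P ∈ 𝒬,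
      ∫ ω, |partialSum X (k + 1) ω| ^ r / ((k + 1 : ℕ) : ℝ) ^ (r / 2) ∂P ≤ K := by
    intro P hP
    rw [integral_div, div_le_iff₀ (by positivity)]
    exact (main k P hP).2
  exact ⟨aux_hf_iff.2 ⟨fun P hP => (main k P hP).1.div_const _, K, hb⟩, aux_upper_le h𝒬 hb⟩
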